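/- Let f: X×X → X be a continuous map with |f(x,y)|² ≤ L(1+|x|²+|y|²) for some L > 0 and all x, y ∈ X, and define b_f(x,μ) := ∫_X f(x,y) dμ(y) for (x,μ) ∈ X×P₂(X). If (μ_n)_n ⊂ P₂(X) and μ ∈ P₂(X) are such that μ_n → μ narrowly (i.e. against all bounded continuous functions) and ∫|x|² dμ_n → ∫|x|² dμ (equivalently, μ_n → μ in the 2-Wasserstein sense), then (b_f(·,μ_n))_♯μ_n → (b_f(·,μ))_♯μ narrowly in P(X). -/

import Mathlib

open MeasureTheory ProbabilityTheory Filter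
open scoped ENNReal

variable {X : Type*} [NormedAddCommGroup X] [InnerProductSpace ℝ X]
  [CompleteSpace X] [SecondCountableTopology X] [MeasurableSpace X] [BorelSpace X]

/-- Membership in the Wasserstein space `P₂(Y)`. -/
def MemP2 {Y : Type*} [NormedAddCommGroup Y] [MeasurableSpace Y] (μ : Measure Y) : Prop :=
  IsProbabilityMeasure μ ∧ Integrable (fun y => ‖y‖ ^ 2) μ

open TopologicalSpace in
/-- Bounded continuous integrands depending on a parameter. -/
lemma aux_bounded {T Z : Type*} [TopologicalSpace T] [SecondCountableTopology T]
    [PseudoMetrizableSpace T] [TopologicalSpace Z] [SecondCountableTopology Z]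
    [PseudoMetrizableSpace Z] [MeasurableSpace Z] [BorelSpace Z]
    (ν : T → ProbabilityMeasure Z) (hν : Continuous ν)
    (φ : T × Z → ℝ) (hφ : Continuous φ) (C : ℝ) (hC : ∀ p, |φ p| ≤ C) :
    Continuous (fun t => ∫ z, φ (t, z) ∂(ν t : Measure Z)) := by
  letI : MeasurableSpace T := borel T
  haveI : BorelSpace T := ⟨rfl⟩
  let G : BoundedContinuousFunction (T × Z) ℝ :=
    BoundedContinuousFunction.ofNormedAddCommGroup φ hφ C hC
  have h1 : Continuous (fun t : T => (diracProba t).prod (ν t)) :=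
    ProbabilityMeasure.continuous_prod.comp (continuous_diracProba.prodMk hν)
  rw [continuous_iff_continuousAt]
  intro t
  have h2 := (ProbabilityMeasure.tendsto_iff_forall_integral_tendsto.1 (h1.tendsto t)) G
  have key : ∀ s : T, ∫ ω, G ω ∂((diracProba s).prod (ν s) : Measure (T × Z))
      = ∫ z, φ (s, z) ∂(ν s : Measure Z) := by
    intro s
    change ∫ ω, φ ω ∂((Measure.dirac s).prod (ν s : Measure Z)) = _
    rw [Measure.dirac_prod, integral_map measurable_prodMk_left.aemeasurable
      hφ.aestronglyMeasurable]
  unfold ContinuousAt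
  simpa only [key] using h2

open TopologicalSpace in
/-- Lower semicontinuity for nonnegative integrands. -/
lemma aux_lsc {T Z : Type*} [TopologicalSpace T] [SecondCountableTopology T]
    [PseudoMetrizableSpace T] [TopologicalSpace Z] [SecondCountableTopology Z]
    [PseudoMetrizableSpace Z] [MeasurableSpace Z] [BorelSpace Z]
    (ν : T → ProbabilityMeasure Z) (hν : Continuous ν)
    (φ : T × Z → ℝ) (hφ : Continuous φ) (h0 : ∀ p, 0 ≤ φ p)
    (hint : ∀ t, Integrable (fun z => φ (t, z)) (ν t : Measure Z)) :
    LowerSemicontinuous (fun t => ∫ z, φ (t, z) ∂(ν t : Measure Z)) := by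
  intro t c hc
  have hk : ∀ k : ℕ, Continuous (fun s => ∫ z, min (φ (s, z)) (k : ℝ) ∂(ν s : Measure Z)) := by
    intro k
    refine aux_bounded ν hν (fun p => min (φ p) (k : ℝ)) (by fun_prop) k ?_
    intro p
    have := h0 p
    rw [abs_of_nonneg (le_min this (by positivity))]
    exact min_le_right _ _
  have hki : ∀ (k : ℕ) s, Integrable (fun z => min (φ (s, z)) (k : ℝ)) (ν s : Measure Z) :=
    fun k s => (hint s).inf (integrable_const _)
  have hlim : Tendsto (fun k : ℕ => ∫ z, min (φ (t, z)) (k : ℝ) ∂(ν t : Measure Z)) atTop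
      (nhds (∫ z, φ (t, z) ∂(ν t : Measure Z))) := by
    refine integral_tendsto_of_tendsto_of_monotone (fun k => hki k t) (hint t) ?_ ?_
    · refine Eventually.of_forall fun z k l hkl => ?_
      exact min_le_min le_rfl (by exact_mod_cast hkl)
    · refine Eventually.of_forall fun z => ?_
      refine tendsto_const_nhds.congr' ?_
      filter_upwards [eventually_ge_atTop ⌈φ (t, z)⌉₊] with k hk
      exact (min_eq_left (Nat.ceil_le.1 hk)).symm
  obtain ⟨k, hck⟩ := (hlim.eventually (lt_mem_nhds hc)).exists
  filter_upwards [(hk k).tendsto t |>.eventually (lt_mem_nhds hck)] with s hs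
  exact hs.trans_le (integral_mono (hki k s) (hint s) fun z => min_le_left _ _)

open TopologicalSpace in
/-- Dominated integrands whose dominating function has continuous integral. -/
lemma aux_dom {T Z : Type*} [TopologicalSpace T] [SecondCountableTopology T]
    [PseudoMetrizableSpace T] [TopologicalSpace Z] [SecondCountableTopology Z]
    [PseudoMetrizableSpace Z] [MeasurableSpace Z] [BorelSpace Z]
    (ν : T → ProbabilityMeasure Z) (hν : Continuous ν)
    (φ ψ : T × Z → ℝ) (hφ : Continuous φ) (hψ : Continuous ψ) (hle : ∀ p, |φ p| ≤ ψ p)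
    (hint : ∀ t, Integrable (fun z => ψ (t, z)) (ν t : Measure Z))
    (hcont : Continuous (fun t => ∫ z, ψ (t, z) ∂(ν t : Measure Z))) :
    Continuous (fun t => ∫ z, φ (t, z) ∂(ν t : Measure Z)) := by
  have hφi : ∀ t, Integrable (fun z => φ (t, z)) (ν t : Measure Z) := fun t =>
    (hint t).mono' (hφ.comp (Continuous.prodMk_right t)).aestronglyMeasurable
      (Eventually.of_forall fun z => hle (t, z))
  have h1 := aux_lsc ν hν (fun p => ψ p + φ p) (by fun_prop)
    (fun p => by linarith [neg_le_of_abs_le (hle p)]) (fun t => (hint t).add (hφi t))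
  have h2 := aux_lsc ν hν (fun p => ψ p - φ p) (by fun_prop)
    (fun p => by linarith [le_of_abs_le (hle p)]) (fun t => (hint t).sub (hφi t))
  have e1 : ∀ t, ∫ z, (ψ (t, z) + φ (t, z)) ∂(ν t : Measure Z)
      = ∫ z, ψ (t, z) ∂(ν t : Measure Z) + ∫ z, φ (t, z) ∂(ν t : Measure Z) :=
    fun t => integral_add (hint t) (hφi t)
  have e2 : ∀ t, ∫ z, (ψ (t, z) - φ (t, z)) ∂(ν t : Measure Z)
      = ∫ z, ψ (t, z) ∂(ν t : Measure Z) - ∫ z, φ (t, z) ∂(ν t : Measure Z) :=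
    fun t => integral_sub (hint t) (hφi t)
  simp only [e1] at h1
  simp only [e2] at h2
  rw [continuous_iff_continuousAt]
  intro t
  rw [ContinuousAt, Metric.tendsto_nhds]
  intro ε hε
  have a1 := h1 t _ (sub_lt_self _ (half_pos hε))
  have a2 := h2 t _ (sub_lt_self _ (half_pos hε))
  have a3 := Metric.tendsto_nhds.1 (hcont.tendsto t) (ε / 2) (half_pos hε)
  filter_upwards [a1, a2, a3] with s b1 b2 b3
  rw [Real.dist_eq, abs_lt] at *
  constructor <;> linarith [b3.1, b3.2]

open TopologicalSpace in
/-- Joint continuity of the nonlocal field along a continuous curve of measures. -/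
lemma aux_field {T : Type*} [TopologicalSpace T] [SecondCountableTopology T]
    [PseudoMetrizableSpace T]
    (f : X × X → X) (hf : Continuous f) (L : ℝ)
    (hgrowth : ∀ x y : X, ‖f (x, y)‖ ^ 2 ≤ L * (1 + ‖x‖ ^ 2 + ‖y‖ ^ 2))
    (ν : T → ProbabilityMeasure X) (hν : Continuous ν)
    (hint : ∀ t, Integrable (fun y : X => ‖y‖ ^ 2) (ν t : Measure X))
    (hM : Continuous (fun t => ∫ y, ‖y‖ ^ 2 ∂(ν t : Measure X))) :
    Continuous (fun p : X × T => ∫ y, f (p.1, y) ∂(ν p.2 : Measure X)) := by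
  set B : X × T → X := fun p => ∫ y, f (p.1, y) ∂(ν p.2 : Measure X) with hB
  have hfi : ∀ p : X × T, Integrable (fun y => f (p.1, y)) (ν p.2 : Measure X) := by
    intro p
    have hb : Integrable (fun y : X => 1 + L * (1 + ‖p.1‖ ^ 2 + ‖y‖ ^ 2)) (ν p.2 : Measure X) :=
      (integrable_const _).add (((integrable_const _).add (hint p.2)).const_mul L)
    refine hb.mono' (hf.comp (Continuous.prodMk_right p.1)).aestronglyMeasurable
      (Eventually.of_forall fun y => ?_)
    have := hgrowth p.1 y
    nlinarith [sq_nonneg (‖f (p.1, y)‖ - 1), norm_nonneg (f (p.1, y))]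
  have hK : Continuous (fun q : (X × T) × (X × T) => inner ℝ (B q.1) (B q.2)) := by
    have e : ∀ q : (X × T) × (X × T), inner ℝ (B q.1) (B q.2)
        = ∫ z : X × X, inner ℝ (f (q.1.1, z.1)) (f (q.2.1, z.2))
          ∂(((ν q.1.2).prod (ν q.2.2) : ProbabilityMeasure (X × X)) : Measure (X × X)) := by
      intro q
      rw [ProbabilityMeasure.toMeasure_prod]
      exact (integral_prod_bilin (innerSL ℝ : X →L[ℝ] X →L[ℝ] ℝ) (hfi q.1) (hfi q.2)).symm
    simp only [e]
    have i1 : ∀ q : (X × T) × (X × T), Integrable (fun z : X × X => ‖z.1‖ ^ 2)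
        ((ν q.1.2 : Measure X).prod (ν q.2.2 : Measure X)) :=
      fun q => (hint q.1.2).comp_fst _
    have i2 : ∀ q : (X × T) × (X × T), Integrable (fun z : X × X => ‖z.2‖ ^ 2)
        ((ν q.1.2 : Measure X).prod (ν q.2.2 : Measure X)) :=
      fun q => (hint q.2.2).comp_snd _
    refine aux_dom (T := (X × T) × (X × T)) (Z := X × X)
      (fun q => (ν q.1.2).prod (ν q.2.2)) ?_
      (fun p => inner ℝ (f (p.1.1.1, p.2.1)) (f (p.1.2.1, p.2.2)))
      (fun p => L / 2 * (2 + ‖p.1.1.1‖ ^ 2 + ‖p.1.2.1‖ ^ 2 + (‖p.2.1‖ ^ 2 + ‖p.2.2‖ ^ 2)))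
      (by fun_prop) (by fun_prop) ?_ ?_ ?_
    · exact ProbabilityMeasure.continuous_prod.comp
        ((hν.comp (by fun_prop : Continuous fun q : (X × T) × (X × T) => q.1.2)).prodMk
          (hν.comp (by fun_prop : Continuous fun q : (X × T) × (X × T) => q.2.2)))
    · rintro ⟨⟨⟨x, t⟩, ⟨x', t'⟩⟩, ⟨y, y'⟩⟩
      have a := abs_real_inner_le_norm (f (x, y)) (f (x', y'))
      have b := hgrowth x y
      have c := hgrowth x' y'
      simp only
      nlinarith [sq_nonneg (‖f (x, y)‖ - ‖f (x', y')‖)]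
    · intro q
      have i3 : Integrable (fun _ : X × X => 2 + ‖q.1.1‖ ^ 2 + ‖q.2.1‖ ^ 2)
        ((ν q.1.2 : Measure X).prod (ν q.2.2 : Measure X)) := integrable_const _
      exact (i3.add ((i1 q).add (i2 q))).const_mul _
    · have e2 : ∀ q : (X × T) × (X × T), ∫ z : X × X,
          L / 2 * (2 + ‖q.1.1‖ ^ 2 + ‖q.2.1‖ ^ 2 + (‖z.1‖ ^ 2 + ‖z.2‖ ^ 2))
            ∂(((ν q.1.2).prod (ν q.2.2) : ProbabilityMeasure (X × X)) : Measure (X × X))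
          = L / 2 * (2 + ‖q.1.1‖ ^ 2 + ‖q.2.1‖ ^ 2
            + (∫ y, ‖y‖ ^ 2 ∂(ν q.1.2 : Measure X) + ∫ y, ‖y‖ ^ 2 ∂(ν q.2.2 : Measure X))) := by
        intro q
        have i4 : Integrable (fun z : X × X => ‖z.1‖ ^ 2 + ‖z.2‖ ^ 2)
          ((ν q.1.2 : Measure X).prod (ν q.2.2 : Measure X)) := (i1 q).add (i2 q)
        rw [ProbabilityMeasure.toMeasure_prod, integral_const_mul,
          integral_add (integrable_const _) i4, integral_add (i1 q) (i2 q),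
          integral_fun_fst (fun y : X => ‖y‖ ^ 2), integral_fun_snd (fun y : X => ‖y‖ ^ 2)]
        simp
      simp only [e2]
      have m1 := hM.comp (by fun_prop : Continuous fun q : (X × T) × (X × T) => q.1.2)
      have m2 := hM.comp (by fun_prop : Continuous fun q : (X × T) × (X × T) => q.2.2)
      simp only [Function.comp_def] at m1 m2
      fun_prop
  rw [continuous_iff_continuousAt]
  intro p₀
  rw [ContinuousAt, tendsto_iff_norm_sub_tendsto_zero]
  have hsq : Tendsto (fun p => ‖B p - B p₀‖ ^ 2) (nhds p₀) (nhds 0) := by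
    have c : Continuous (fun p => inner ℝ (B p) (B p) - 2 * inner ℝ (B p) (B p₀)
        + inner ℝ (B p₀) (B p₀)) := by
      have k1 := hK.comp (by fun_prop : Continuous fun p : X × T => (p, p))
      have k2 := hK.comp (by fun_prop : Continuous fun p : X × T => (p, p₀))
      simp only [Function.comp_def] at k1 k2
      fun_prop
    have := c.tendsto p₀
    convert this using 2
    · rename_i p
      rw [norm_sub_sq_real, real_inner_self_eq_norm_sq, real_inner_self_eq_norm_sq]
    · ring
  have := hsq.sqrt
  simpa using this

/-- Let `f : X×X → X` be continuous with
`|f(x,y)|² ≤ L(1+|x|²+|y|²)` and set `b_f(x,μ) := ∫ f(x,y) dμ(y)`.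
If `μₙ → μ` narrowly together with convergence of second moments (i.e. in `P₂(X)`),
then `(b_f(·,μₙ))_♯μₙ → (b_f(·,μ))_♯μ` narrowly in `P(X)`. -/
theorem stmt4 (f : X × X → X) (hf : Continuous f) (L : ℝ) (hL : 0 < L)
    (hgrowth : ∀ x y : X, ‖f (x, y)‖ ^ 2 ≤ L * (1 + ‖x‖ ^ 2 + ‖y‖ ^ 2))
    (μs : ℕ → Measure X) (μ : Measure X) (hμs : ∀ n, MemP2 (μs n)) (hμ : MemP2 μ)
    (hnarrow : ∀ g : BoundedContinuousFunction X ℝ,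
      Tendsto (fun n => ∫ x, g x ∂(μs n)) atTop (nhds (∫ x, g x ∂μ)))
    (hmom : Tendsto (fun n => ∫ x, ‖x‖ ^ 2 ∂(μs n)) atTop (nhds (∫ x, ‖x‖ ^ 2 ∂μ))) :
    ∀ g : BoundedContinuousFunction X ℝ,
      Tendsto (fun n => ∫ x, g x ∂((μs n).map (fun x => ∫ y, f (x, y) ∂(μs n))))
        atTop (nhds (∫ x, g x ∂(μ.map (fun x => ∫ y, f (x, y) ∂μ)))) := by
  intro g
  haveI : SecondCountableTopology (OnePoint ℕ) := by
    letI := TopologicalSpace.metrizableSpaceMetric (OnePoint ℕ)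
    infer_instance
  let ν : OnePoint ℕ → ProbabilityMeasure X := fun t =>
    Option.elim t ⟨μ, hμ.1⟩ (fun n => ⟨μs n, (hμs n).1⟩)
  have hν : Continuous ν := by
    rw [OnePoint.continuous_iff_from_nat]
    exact ProbabilityMeasure.tendsto_iff_forall_integral_tendsto.2 hnarrow
  have hint : ∀ t, Integrable (fun y : X => ‖y‖ ^ 2) (ν t : Measure X) := by
    intro t
    cases t with
    | infty => exact hμ.2
    | coe n => exact (hμs n).2
  have hM : Continuous (fun t => ∫ y, ‖y‖ ^ 2 ∂(ν t : Measure X)) := by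
    rw [OnePoint.continuous_iff_from_nat]
    exact hmom
  have hB := aux_field f hf L hgrowth ν hν hint hM
  have hfin := aux_bounded ν hν
    (fun p : OnePoint ℕ × X => g (∫ y, f (p.2, y) ∂(ν p.1 : Measure X)))
    (g.continuous.comp (hB.comp continuous_swap)) ‖g‖ (fun p => g.norm_coe_le_norm _)
  have key : ∀ t, ∫ x, g x ∂((ν t : Measure X).map (fun x => ∫ y, f (x, y) ∂(ν t : Measure X)))
      = ∫ x, g (∫ y, f (x, y) ∂(ν t : Measure X)) ∂(ν t : Measure X) := by
    intro t
    exact integral_map (hB.comp (Continuous.prodMk_left t)).measurable.aemeasurable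
      g.continuous.aestronglyMeasurable
  have h := (OnePoint.continuous_iff_from_nat _).1 hfin
  simp only [← key] at h
  exact h
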